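/- Let S be a BQ-algebra of rank n over ℤ/2 with degree-one generators x_1,…,x_n, let S' be a graded ℤ/2-algebra with S'_{n−1} ≠ 0, and let f : S → S' be a surjective homomorphism of graded ℤ/2-algebras. If the kernel of the induced ℤ/2-linear map f : S_1 → S'_1 has dimension exactly one, then S' is a BQ-algebra of rank n−1; that is, there exist elements y_1,…,y_{n−1} ∈ S'_1 generating S' as a ℤ/2-algebra such that y_k² = Σ_{i<k} c_{ik} y_i y_k for some c_{ik} ∈ ℤ/2 and y_1 y_2 ⋯ y_{n−1} ≠ 0. -/

import Mathlib

/-!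
The triangular relations let one rewrite squares until only squarefree monomials in the generators
remain, so a graded algebra generated in degree one by `m` triangular elements has its degree `m`
part spanned by their product. The images under `f` of the generators of `S` are again triangular,
and they are linearly dependent because `f` kills a nonzero element of `S_1`. Hence one of them is a
combination of its predecessors, and omitting it changes neither the generated algebra nor the
triangular shape of the relations. The product of the remaining `n - 1` elements spans the nonzero
space `S'_{n-1}`, so it is nonzero.
-/

section LinearAlgebra

variable {R K ι κ M V : Type*}

theorem homogeneous_le_span_image [Semiring R] [AddCommMonoid M] [Module R M] [DecidableEq ι]
    (ℳ : ι → Submodule R M) [DirectSum.Decomposition ℳ] {v : κ → M} {d : κ → ι}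
    (hd : ∀ j, v j ∈ ℳ (d j)) (hv : Submodule.span R (Set.range v) = ⊤) (i : ι) :
    ℳ i ≤ Submodule.span R (v '' {j | d j = i}) := by
  let proj : M →ₗ[R] M := (ℳ i).subtype ∘ₗ DirectSum.component R ι (ℳ ·) i ∘ₗ
    (DirectSum.decomposeLinearEquiv ℳ : M →ₗ[R] DirectSum ι (ℳ ·))
  have proj_apply (z : M) : proj z = DirectSum.decompose ℳ z i := rfl
  have proj_mem : Submodule.span R (Set.range v) ≤
      (Submodule.span R (v '' {j | d j = i})).comap proj := by
    rw [Submodule.span_le]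
    rintro _ ⟨j, rfl⟩
    rw [SetLike.mem_coe, Submodule.mem_comap, proj_apply]
    by_cases hj : d j = i
    · rw [DirectSum.decompose_of_mem_same ℳ (hj ▸ hd j)]
      exact Submodule.subset_span ⟨j, hj, rfl⟩
    · rw [DirectSum.decompose_of_mem_ne ℳ (hd j) hj]
      exact Submodule.zero_mem _
  intro z hz
  have hz' := proj_mem (hv ▸ Submodule.mem_top : z ∈ _)
  rwa [Submodule.mem_comap, proj_apply, DirectSum.decompose_of_mem_same ℳ hz] at hz'

theorem exists_mem_span_Iio_of_not_linearIndependent [DivisionRing K] [AddCommGroup V] [Module K V]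
    [LinearOrder ι] [Finite ι] {v : ι → V} (hv : ¬LinearIndependent K v) :
    ∃ p, v p ∈ Submodule.span K (v '' Set.Iio p) := by
  classical
  have := Fintype.ofFinite ι
  contrapose! hv
  suffices ∀ s : Finset ι, LinearIndepOn K v s by
    simpa only [Finset.coe_univ, linearIndepOn_univ_iff] using this Finset.univ
  intro s
  induction s using Finset.induction_on_max with
  | empty => simp
  | insert p s hlt hs =>
    rw [Finset.coe_insert]
    exact hs.insert fun hp => hv p (Submodule.span_mono (Set.image_mono hlt) hp)

theorem mem_span_comp_of_skipped_mem_span_Iio [Semiring R] [AddCommMonoid M] [Module R M]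
    [Preorder ι] [WellFoundedLT ι] [LE κ] (e : κ ↪o ι) {x : ι → M}
    (hskip : ∀ i ∉ Set.range e, x i ∈ Submodule.span R (x '' Set.Iio i)) (i : ι) :
    x i ∈ Submodule.span R ((x ∘ e) '' {j | e j ≤ i}) := by
  induction i using WellFoundedLT.induction with
  | ind i ih =>
    by_cases hi : i ∈ Set.range e
    · obtain ⟨j, rfl⟩ := hi
      exact Submodule.subset_span ⟨j, le_rfl, rfl⟩
    · refine Submodule.span_le.2 ?_ (hskip i hi)
      rintro _ ⟨l, hl, rfl⟩
      exact Submodule.span_mono (Set.image_mono fun j hj => hj.trans (le_of_lt hl)) (ih l hl)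

end LinearAlgebra

theorem adjoin_range_comp_orderEmbedding {R A ι κ : Type*} [CommSemiring R] [Semiring A]
    [Algebra R A] [Preorder ι] [WellFoundedLT ι] [LE κ] (e : κ ↪o ι) {x : ι → A}
    (hskip : ∀ i ∉ Set.range e, x i ∈ Submodule.span R (x '' Set.Iio i)) :
    Algebra.adjoin R (Set.range (x ∘ e)) = Algebra.adjoin R (Set.range x) := by
  refine le_antisymm (Algebra.adjoin_mono (Set.range_comp_subset_range e x))
    (Algebra.adjoin_le ?_)
  rintro _ ⟨i, rfl⟩
  exact Algebra.span_le_adjoin R _ (Submodule.span_mono (Set.image_subset_range _ _)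
    (mem_span_comp_of_skipped_mem_span_Iio e hskip i))

theorem adjoin_range_comp_eq_top {R A B ι : Type*} [CommSemiring R] [Semiring A] [Algebra R A]
    [Semiring B] [Algebra R B] {x : ι → A} (hgen : Algebra.adjoin R (Set.range x) = ⊤)
    {f : A →ₐ[R] B} (hf : Function.Surjective f) : Algebra.adjoin R (Set.range (f ∘ x)) = ⊤ := by
  rw [Set.range_comp, ← AlgHom.map_adjoin, hgen, Algebra.map_top, (AlgHom.range_eq_top f).2 hf]

/-- Condition (P1) of a BQ-algebra: the square of each `x k` is a linear combination of the products
`x i * x k` with `i < k`. The combination is encoded as `v * x k` with `v` in the span of the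
predecessors of `x k`, which makes sense without finiteness of the index set. -/
def HasTriangularSquares (R : Type*) {A ι : Type*} [CommSemiring R] [Semiring A] [Algebra R A]
    [Preorder ι] (x : ι → A) : Prop :=
  ∀ k, ∃ v ∈ Submodule.span R (x '' Set.Iio k), x k ^ 2 = v * x k

theorem hasTriangularSquares_iff_exists_sum {R A ι : Type*} [CommSemiring R] [Semiring A]
    [Algebra R A] [Preorder ι] [DecidableLT ι] [Fintype ι] {x : ι → A} :
    HasTriangularSquares R x ↔ ∀ k, ∃ a : ι → R,
      x k ^ 2 = ∑ i ∈ Finset.univ.filter (fun i => i < k), a i • (x i * x k) := by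
  refine forall_congr' fun k => ?_
  have hcoe : Set.Iio k = ((Finset.univ.filter (fun i => i < k) : Finset ι) : Set ι) := by
    ext; simp
  simp only [hcoe, Submodule.mem_span_image_finset_iff_exists_fun', exists_exists_eq_and,
    Finset.sum_mul, smul_mul_assoc]

namespace HasTriangularSquares

variable {R A B ι κ : Type*} [CommSemiring R]

theorem map [Semiring A] [Algebra R A] [Semiring B] [Algebra R B] [Preorder ι] {x : ι → A}
    (hx : HasTriangularSquares R x) (f : A →ₐ[R] B) : HasTriangularSquares R (f ∘ x) := by
  intro k
  obtain ⟨v, hv, hsq⟩ := hx k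
  refine ⟨f v, ?_, by simp only [Function.comp_apply, ← map_pow, hsq, map_mul]⟩
  rw [Set.image_comp]
  exact Submodule.apply_mem_span_image_of_mem_span f.toLinearMap hv

theorem comp_orderEmbedding [Semiring A] [Algebra R A] [Preorder ι] [WellFoundedLT ι] [Preorder κ]
    {x : ι → A} (hx : HasTriangularSquares R x) (e : κ ↪o ι)
    (hskip : ∀ i ∉ Set.range e, x i ∈ Submodule.span R (x '' Set.Iio i)) :
    HasTriangularSquares R (x ∘ e) := by
  intro k
  obtain ⟨v, hv, hsq⟩ := hx (e k)
  refine ⟨v, Submodule.span_le.2 ?_ hv, hsq⟩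
  rintro _ ⟨i, hi, rfl⟩
  exact Submodule.span_mono (Set.image_mono fun j hj => e.lt_iff_lt.1 (lt_of_le_of_lt hj hi))
    (mem_span_comp_of_skipped_mem_span_Iio e hskip i)

variable [CommSemiring A] [Algebra R A] [Preorder ι] [WellFoundedLT ι] {x : ι → A}

theorem mul_prod_mem_span (hx : HasTriangularSquares R x) (k : ι) (T : Finset ι) :
    x k * ∏ i ∈ T, x i ∈
      Submodule.span R (Set.range fun T : Finset ι => ∏ i ∈ T, x i) := by
  classical
  induction k using WellFoundedLT.induction with
  | ind k ih =>
    by_cases hk : k ∈ T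
    · obtain ⟨v, hv, hsq⟩ := hx k
      have hreduce : x k * ∏ i ∈ T, x i = v * ∏ i ∈ T, x i := by
        rw [← Finset.mul_prod_erase T x hk, ← mul_assoc, ← sq, hsq, mul_assoc]
      rw [hreduce]
      suffices Submodule.span R (x '' Set.Iio k) ≤ (Submodule.span R _).comap
          (LinearMap.mulRight R (∏ i ∈ T, x i)) from this hv
      rw [Submodule.span_le]
      rintro _ ⟨i, hi, rfl⟩
      exact ih i hi
    · rw [← Finset.prod_insert hk]
      exact Submodule.subset_span ⟨_, rfl⟩

theorem span_range_prod_eq_top (hx : HasTriangularSquares R x)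
    (hgen : Algebra.adjoin R (Set.range x) = ⊤) :
    Submodule.span R (Set.range fun T : Finset ι => ∏ i ∈ T, x i) = ⊤ := by
  rw [eq_top_iff, ← Algebra.top_toSubmodule, ← hgen, Algebra.adjoin_eq_span, Submodule.span_le]
  intro m hm
  induction hm using Submonoid.closure_induction_left with
  | one => exact Submodule.subset_span ⟨∅, Finset.prod_empty⟩
  | mul_left _ hk z _ hz =>
    obtain ⟨k, rfl⟩ := hk
    suffices Submodule.span R _ ≤ (Submodule.span R _).comap (LinearMap.mulLeft R (x k)) from
      this hz
    rw [Submodule.span_le]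
    rintro _ ⟨T, rfl⟩
    exact hx.mul_prod_mem_span k T

variable (𝒜 : ℕ → Submodule R A)

theorem homogeneous_le_span_prod [GradedRing 𝒜] (hx : HasTriangularSquares R x)
    (hx1 : ∀ i, x i ∈ 𝒜 1) (hgen : Algebra.adjoin R (Set.range x) = ⊤) (q : ℕ) :
    𝒜 q ≤ Submodule.span R ((fun T : Finset ι => ∏ i ∈ T, x i) '' {T | T.card = q}) := by
  refine homogeneous_le_span_image 𝒜 (fun T => ?_) (hx.span_range_prod_eq_top hgen) q
  simpa using SetLike.prod_mem_graded 𝒜 (fun _ => 1) x (F := T) fun i _ => hx1 i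

theorem degree_one_le_span_range [GradedRing 𝒜] (hx : HasTriangularSquares R x)
    (hx1 : ∀ i, x i ∈ 𝒜 1) (hgen : Algebra.adjoin R (Set.range x) = ⊤) :
    𝒜 1 ≤ Submodule.span R (Set.range x) := by
  refine (hx.homogeneous_le_span_prod 𝒜 hx1 hgen 1).trans (Submodule.span_mono ?_)
  rintro _ ⟨T, hT, rfl⟩
  obtain ⟨i, rfl⟩ := Finset.card_eq_one.1 hT
  exact ⟨i, (Finset.prod_singleton x i).symm⟩

theorem prod_ne_zero [Fintype ι] [GradedRing 𝒜] (hx : HasTriangularSquares R x)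
    (hx1 : ∀ i, x i ∈ 𝒜 1) (hgen : Algebra.adjoin R (Set.range x) = ⊤)
    (htop : 𝒜 (Fintype.card ι) ≠ ⊥) : ∏ i, x i ≠ 0 := by
  contrapose! htop with hprod
  rw [eq_bot_iff]
  refine (hx.homogeneous_le_span_prod 𝒜 hx1 hgen _).trans (Submodule.span_le.2 ?_)
  rintro _ ⟨T, hT, rfl⟩
  obtain rfl := (Finset.card_eq_iff_eq_univ T).1 hT
  exact hprod

end HasTriangularSquares

theorem HasTriangularSquares.exists_fin_pred_of_not_linearIndependent {K B : Type*} [Field K]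
    [CommRing B] [Algebra K B] (ℬ : ℕ → Submodule K B) [GradedRing ℬ] {n : ℕ} {z : Fin n → B}
    (hz : HasTriangularSquares K z) (hz1 : ∀ i, z i ∈ ℬ 1)
    (hgen : Algebra.adjoin K (Set.range z) = ⊤) (hdep : ¬LinearIndependent K z)
    (hB : ℬ (n - 1) ≠ ⊥) :
    ∃ y : Fin (n - 1) → B, (∀ i, y i ∈ ℬ 1) ∧ Algebra.adjoin K (Set.range y) = ⊤ ∧
      HasTriangularSquares K y ∧ ∏ i, y i ≠ 0 := by
  obtain ⟨p, hp⟩ := exists_mem_span_Iio_of_not_linearIndependent hdep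
  obtain _ | m := n
  · exact p.elim0
  let e : Fin m ↪o Fin (m + 1) := p.succAboveOrderEmb
  have hskip : ∀ i ∉ Set.range e, z i ∈ Submodule.span K (z '' Set.Iio i) := by
    intro i hi
    obtain rfl : i = p := by simpa [e] using hi
    exact hp
  have hy1 : ∀ j, (z ∘ e) j ∈ ℬ 1 := fun j => hz1 (e j)
  have hygen : Algebra.adjoin K (Set.range (z ∘ e)) = ⊤ :=
    (adjoin_range_comp_orderEmbedding e hskip).trans hgen
  have hysq : HasTriangularSquares K (z ∘ e) := hz.comp_orderEmbedding e hskip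
  have htop : ℬ (Fintype.card (Fin m)) ≠ ⊥ := by rwa [Fintype.card_fin]
  exact ⟨z ∘ e, hy1, hygen, hysq, hysq.prod_ne_zero ℬ hy1 hygen htop⟩

theorem bq_algebra_quotient_is_bq_of_kernel_dim_one_general
    {K S S' : Type*} [Field K] [CommRing S] [Algebra K S] (𝒜 : ℕ → Submodule K S) [GradedRing 𝒜]
    [CommRing S'] [Algebra K S'] (ℬ : ℕ → Submodule K S') [GradedRing ℬ]
    {n : ℕ} {x : Fin n → S} (hx1 : ∀ i, x i ∈ 𝒜 1)
    (hgen : Algebra.adjoin K (Set.range x) = ⊤) (hsq : HasTriangularSquares K x)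
    {f : S →ₐ[K] S'} (hf : Function.Surjective f) (hf1 : ∀ s ∈ 𝒜 1, f s ∈ ℬ 1)
    (hB : ℬ (n - 1) ≠ ⊥)
    (hker : LinearMap.ker (f.toLinearMap.restrict (p := 𝒜 1) (q := ℬ 1) hf1) ≠ ⊥) :
    ∃ y : Fin (n - 1) → S', (∀ i, y i ∈ ℬ 1) ∧ Algebra.adjoin K (Set.range y) = ⊤ ∧
      HasTriangularSquares K y ∧ ∏ i, y i ≠ 0 := by
  have hdep : ¬LinearIndependent K (f ∘ x) := fun hli =>
    hker <| LinearMap.ker_eq_bot.2 <| (LinearMap.injective_restrict_iff hf1).2 <|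
      (Submodule.range_ker_disjoint (f := f.toLinearMap) hli).mono_left
        (hsq.degree_one_le_span_range 𝒜 hx1 hgen)
  exact (hsq.map f).exists_fin_pred_of_not_linearIndependent ℬ (fun i => hf1 _ (hx1 i))
    (adjoin_range_comp_eq_top hgen hf) hdep hB

/-- Let `S` be a BQ-algebra of rank `n` over `ℤ/2` with degree-one
generators `x_1, …, x_n`, let `S'` be a graded `ℤ/2`-algebra with `S'_{n-1} ≠ 0`, and let
`f : S → S'` be a surjective homomorphism of graded `ℤ/2`-algebras. If the kernel of the
induced linear map `S_1 → S'_1` has dimension exactly one, then `S'` is a BQ-algebra of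
rank `n - 1`: there are degree-one elements `y_1, …, y_{n-1}` generating `S'` with
`y_k² = Σ_{i<k} c_{ik} y_i y_k` and `y_1 ⋯ y_{n-1} ≠ 0`. -/
theorem bq_algebra_quotient_is_bq_of_kernel_dim_one
    {S : Type*} [CommRing S] [Algebra (ZMod 2) S]
    (𝒜 : ℕ → Submodule (ZMod 2) S) [GradedRing 𝒜]
    {S' : Type*} [CommRing S'] [Algebra (ZMod 2) S']
    (ℬ : ℕ → Submodule (ZMod 2) S') [GradedRing ℬ]
    {n : ℕ} (x : Fin n → S)
    (hx1 : ∀ i, x i ∈ 𝒜 1)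
    (hgen : Algebra.adjoin (ZMod 2) (Set.range x) = ⊤)
    (hP1 : ∀ k : Fin n, ∃ a : Fin n → ZMod 2,
      x k ^ 2 = ∑ i ∈ Finset.univ.filter (fun i => i < k), a i • (x i * x k))
    (hP2 : ∏ i, x i ≠ 0)
    (f : S →ₐ[ZMod 2] S') (hf : Function.Surjective f)
    (hgr : ∀ q : ℕ, ∀ s ∈ 𝒜 q, f s ∈ ℬ q)
    (hB : ℬ (n - 1) ≠ ⊥)
    (hker : Module.finrank (ZMod 2)
      (LinearMap.ker (f.toLinearMap.restrict (p := 𝒜 1) (q := ℬ 1) (hgr 1))) = 1) :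
    ∃ y : Fin (n - 1) → S',
      (∀ i, y i ∈ ℬ 1) ∧
      Algebra.adjoin (ZMod 2) (Set.range y) = ⊤ ∧
      (∀ k : Fin (n - 1), ∃ c : Fin (n - 1) → ZMod 2,
        y k ^ 2 = ∑ i ∈ Finset.univ.filter (fun i => i < k), c i • (y i * y k)) ∧
      ∏ i, y i ≠ 0 := by
  simp only [← hasTriangularSquares_iff_exists_sum] at hP1 ⊢
  exact bq_algebra_quotient_is_bq_of_kernel_dim_one_general 𝒜 ℬ hx1 hgen hP1 hf (hgr 1) hB
    fun h => by rw [h, finrank_bot] at hker; exact zero_ne_one hker
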